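/- Let f = (f^1,…,f^m) : ℝ^n → ℝ^m be a C² map. Then at every point of ℝ^n, 2 Σ over i,k,l,α,β of M_{kl} U^{αβ} (f_{ii}^β f_{kl}^α − f_{ik}^β f_{il}^α) equals −Σ over i,k,α,β of (∂_i U^{αβ})(f_i^β f_{kk}^α − f_k^β f_{ik}^α) − Σ over i,k,α,β,γ,μ of U^{αγ} U^{βμ} ⟨Df^γ, Df_i^μ⟩ ∂_k F_{ik}^{βα}, where M_{ij} = δ_{ij} − g^{ij} and F_{ik}^{βα} = f_i^β f_k^α − f_k^β f_i^α. -/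

import Mathlib

open MeasureTheory Filter Matrix
open scoped Topology

noncomputable section

/-- Partial derivative ∂φ/∂x_i. -/
def pd {n : ℕ} (φ : EuclideanSpace ℝ (Fin n) → ℝ) (i : Fin n)
    (x : EuclideanSpace ℝ (Fin n)) : ℝ :=
  fderiv ℝ φ x (EuclideanSpace.single i 1)

/-- Second partial derivative ∂²φ/∂x_i∂x_j. -/
def pd2 {n : ℕ} (φ : EuclideanSpace ℝ (Fin n) → ℝ) (i j : Fin n)
    (x : EuclideanSpace ℝ (Fin n)) : ℝ :=
  pd (pd φ j) i x

/-- Induced metric of the graph of `f`: g_{ij} = δ_{ij} + f_i^α f_j^α. -/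
def gmat {n m : ℕ} (f : Fin m → EuclideanSpace ℝ (Fin n) → ℝ)
    (x : EuclideanSpace ℝ (Fin n)) : Matrix (Fin n) (Fin n) ℝ :=
  Matrix.of fun i j => (if i = j then (1:ℝ) else 0) + ∑ α, pd (f α) i x * pd (f α) j x

/-- Gram matrix of the normal frame: U_{αβ} = δ_{αβ} + ⟨Df^α, Df^β⟩. -/
def Umat {n m : ℕ} (f : Fin m → EuclideanSpace ℝ (Fin n) → ℝ)
    (x : EuclideanSpace ℝ (Fin n)) : Matrix (Fin m) (Fin m) ℝ :=
  Matrix.of fun α β => (if α = β then (1:ℝ) else 0) + ∑ i, pd (f α) i x * pd (f β) i x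

/-- Scalar curvature of the graph of `f`:
S = g^{ij} g^{kl} U^{αβ} (f_{ij}^β f_{kl}^α − f_{ik}^β f_{jl}^α). -/
def Sc {n m : ℕ} (f : Fin m → EuclideanSpace ℝ (Fin n) → ℝ)
    (x : EuclideanSpace ℝ (Fin n)) : ℝ :=
  ∑ i, ∑ j, ∑ k, ∑ l, ∑ α, ∑ β,
    (gmat f x)⁻¹ i j * (gmat f x)⁻¹ k l * (Umat f x)⁻¹ α β *
      (pd2 (f β) i j x * pd2 (f α) k l x - pd2 (f β) i k x * pd2 (f α) j l x)

/-- Contraction S^⊥ of the normal curvature tensor of the graph of `f`: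
S^⊥ = U^{αγ} U^{βμ} (⟨Df_k^γ, Df_i^μ⟩ + U^{θν} ⟨Df_i^μ, Df^ν⟩ ⟨Df_k^γ, Df^θ⟩)
        (f_i^α f_k^β − f_i^β f_k^α). -/
def Sperp {n m : ℕ} (f : Fin m → EuclideanSpace ℝ (Fin n) → ℝ)
    (x : EuclideanSpace ℝ (Fin n)) : ℝ :=
  ∑ i, ∑ k, ∑ α, ∑ β, ∑ γ, ∑ μ,
    (Umat f x)⁻¹ α γ * (Umat f x)⁻¹ β μ *
      ((∑ l, pd2 (f γ) k l x * pd2 (f μ) i l x) +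
        ∑ θ, ∑ ν, (Umat f x)⁻¹ θ ν * (∑ l, pd2 (f μ) i l x * pd (f ν) l x) *
          (∑ l, pd2 (f γ) k l x * pd (f θ) l x)) *
      (pd (f α) i x * pd (f β) k x - pd (f β) i x * pd (f α) k x)

/-- ω_{n−1}: the (n−1)-dimensional (Hausdorff) volume of the unit sphere in ℝ^n. -/
def sphereVol (n : ℕ) : ℝ :=
  (μH[(n:ℝ) - 1] (Metric.sphere (0 : EuclideanSpace ℝ (Fin n)) 1)).toReal

/-- The ADM mass integrand (∂_i g_{ij} − ∂_j g_{ii}) (x_j/r), summed over i, j. -/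
def admIntegrand {n m : ℕ} (f : Fin m → EuclideanSpace ℝ (Fin n) → ℝ) (r : ℝ)
    (x : EuclideanSpace ℝ (Fin n)) : ℝ :=
  ∑ i, ∑ j, (pd (fun y => gmat f y i j) i x - pd (fun y => gmat f y i i) j x) * (x j / r)

/-- M_{ij} = δ_{ij} − g^{ij}. -/
def Mmat {n m : ℕ} (f : Fin m → EuclideanSpace ℝ (Fin n) → ℝ)
    (x : EuclideanSpace ℝ (Fin n)) (i j : Fin n) : ℝ :=
  (if i = j then (1:ℝ) else 0) - (gmat f x)⁻¹ i j

/-- F_{ik}^{βα} = f_i^β f_k^α − f_k^β f_i^α, as a function of the point. -/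
def Fik {n m : ℕ} (f : Fin m → EuclideanSpace ℝ (Fin n) → ℝ) (β α : Fin m) (i k : Fin n)
    (x : EuclideanSpace ℝ (Fin n)) : ℝ :=
  pd (f β) i x * pd (f α) k x - pd (f β) k x * pd (f α) i x

/-!
With `J = (f_i^α)`, `H_i = ∂_i J` and `V = U⁻¹`, Woodbury's identity gives `M = Jᵀ V J`, and
`∂_i V = -V (A_i + A_iᵀ) V` for `A_i = J H_iᵀ = (⟨Df^γ, Df_i^μ⟩)`. Put
`Q_i^{βα} = Σ_k (f_i^β f_{kk}^α - f_k^β f_{ik}^α)`. By the symmetry of second derivatives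
`Σ_k ∂_k F_{ik} = Q_i - Q_iᵀ`, so the right-hand side is the sum over `i` of
`tr (V (A_i + A_iᵀ) V Q_i) - tr (V A_i V (Q_i - Q_iᵀ))`. The terms `tr (V A_i V Q_i)` cancel, and
taking a transpose leaves `2 tr (V A_iᵀ V Q_i)`, whose sum over `i` is the contraction with
`M = Jᵀ V J` on the left-hand side.
-/

section MatrixAlgebra

variable {ι κ R : Type*} [Fintype ι] [Fintype κ] [CommRing R]

lemma isUnit_one_add_mul_transpose [DecidableEq κ] (A : Matrix κ ι ℝ) :
    IsUnit (1 + A * Aᵀ) := by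
  rw [← conjTranspose_eq_transpose_of_trivial]
  exact (PosDef.one.add_posSemidef (posSemidef_self_mul_conjTranspose A)).isUnit

lemma one_sub_inv_one_add_mul [DecidableEq ι] [DecidableEq κ] (A : Matrix ι κ R)
    (B : Matrix κ ι R) (h : IsUnit (1 + B * A)) :
    1 - (1 + A * B)⁻¹ = A * (1 + B * A)⁻¹ * B := by
  have woodbury := add_mul_mul_inv_eq_sub 1 A 1 B isUnit_one isUnit_one (by simpa using h)
  simp only [inv_one, Matrix.mul_one, Matrix.one_mul] at woodbury
  rw [woodbury, sub_sub_cancel]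

lemma trace_mul_mul_transpose_mul {σ τ : Type*} [Fintype σ] [Fintype τ] (A : Matrix ι κ R)
    (B : Matrix σ τ R) (C : Matrix κ τ R) (D : Matrix σ ι R) :
    trace (A * C * Bᵀ * D) =
      ∑ α, ∑ β, ∑ γ, ∑ μ, A α γ * B β μ * C γ μ * D β α := by
  simp only [trace, diag_apply, Matrix.mul_apply, transpose_apply, Finset.sum_mul]
  refine Finset.sum_congr rfl fun α _ => Finset.sum_congr rfl fun β _ => ?_
  rw [Finset.sum_comm]
  exact Finset.sum_congr rfl fun γ _ => Finset.sum_congr rfl fun μ _ => by ring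

lemma trace_conj_add_transpose_sub_trace_conj {V : Matrix κ κ R} (hV : V.IsSymm)
    (A Q : Matrix κ κ R) :
    trace (V * (A + Aᵀ) * V * Q) - trace (V * A * V * (Q - Qᵀ)) =
      2 * trace (V * Aᵀ * V * Q) := by
  have transposed : trace (V * A * V * Qᵀ) = trace (V * Aᵀ * V * Q) := by
    rw [← trace_transpose]
    simp only [transpose_mul, transpose_transpose, hV.eq]
    rw [trace_mul_comm, ← Matrix.mul_assoc]
  simp only [Matrix.mul_add, Matrix.add_mul, Matrix.mul_sub, trace_add, trace_sub, transposed]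
  ring

/-- The matrix `Q_i^{βα} = Σ_k (f_i^β f_{kk}^α - f_k^β f_{ik}^α)`, where `J β i` stands for `f_i^β`
and `H i α k` for `f_{ik}^α`. Its entry `βα` is the `i`-th component of the first Newton tensor
`Δf^α · 1 - D²f^α` applied to the gradient of `f^β`. -/
def newtonFlux (J : Matrix κ ι R) (H : ι → Matrix κ ι R) (i : ι) : Matrix κ κ R :=
  of fun β α => ∑ k, (J β i * H k α k - J β k * H i α k)

lemma trace_mul_newtonFlux (B : Matrix κ κ R) (J : Matrix κ ι R) (H : ι → Matrix κ ι R) (i : ι) :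
    trace (B * newtonFlux J H i) =
      ∑ α, (B * J) α i * ∑ k, H k α k - trace (B * J * (H i)ᵀ) := by
  have flux_eq : newtonFlux J H i =
      vecMulVec (J.col i) (fun α => ∑ k, H k α k) - J * (H i)ᵀ := by
    ext β α
    simp [newtonFlux, vecMulVec_apply, Matrix.mul_apply, Finset.mul_sum]
  rw [flux_eq, Matrix.mul_sub, trace_sub, mul_vecMulVec, trace_vecMulVec, ← Matrix.mul_assoc]
  rfl

lemma trace_mul_mul_mul_transpose (V : Matrix κ κ R) (A B : Matrix κ ι R) (M : Matrix ι ι R) :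
    trace (V * A * M * Bᵀ) = ∑ k, ∑ l, ∑ α, ∑ β, M k l * V α β * (A β k * B α l) := by
  simp only [trace, diag_apply, Matrix.mul_apply, transpose_apply, Finset.sum_mul]
  rw [Finset.sum_comm]
  simp_rw [Finset.sum_comm (s := (Finset.univ : Finset κ)) (t := (Finset.univ : Finset ι))]
  rw [Finset.sum_comm]
  refine Finset.sum_congr rfl fun k _ => Finset.sum_congr rfl fun l _ =>
    Finset.sum_congr rfl fun α _ => Finset.sum_congr rfl fun β _ => by ring

lemma sum_trace_conj_mul_newtonFlux {V : Matrix κ κ R} (hV : V.IsSymm) (J : Matrix κ ι R)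
    (H : ι → Matrix κ ι R) :
    ∑ i, trace (V * (J * (H i)ᵀ)ᵀ * V * newtonFlux J H i) =
      ∑ i, ∑ k, ∑ l, ∑ α, ∑ β, (Jᵀ * V * J) k l * V α β *
        (H i β i * H k α l - H i β k * H i α l) := by
  set M := Jᵀ * V * J with hM
  have regroup (i : ι) : V * (J * (H i)ᵀ)ᵀ * V * J = V * H i * M := by
    simp only [hM, transpose_mul, transpose_transpose, Matrix.mul_assoc]
  have isSymm_M : M.IsSymm := by
    simp only [hM, IsSymm, transpose_mul, transpose_transpose, hV.eq, Matrix.mul_assoc]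
  have laplacian_term (i k : ι) : ∑ α, (V * H k * M) α k * H i α i =
      ∑ l, ∑ α, ∑ β, M k l * V α β * (H i β i * H k α l) := by
    simp only [Matrix.mul_apply, Finset.sum_mul]
    rw [Finset.sum_comm]
    refine Finset.sum_congr rfl fun l _ => ?_
    rw [Finset.sum_comm]
    refine Finset.sum_congr rfl fun α _ => Finset.sum_congr rfl fun β _ => ?_
    rw [hV.apply α β, isSymm_M.apply k l]
    ring
  simp only [trace_mul_newtonFlux, regroup, mul_sub, Finset.sum_sub_distrib,
    ← trace_mul_mul_mul_transpose, ← laplacian_term, Finset.mul_sum]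
  congr 1
  rw [Finset.sum_comm (γ := ι) (α := ι)]
  exact Finset.sum_congr rfl fun i _ => Finset.sum_comm

end MatrixAlgebra

section PartialDerivatives

variable {n : ℕ} {φ ψ : EuclideanSpace ℝ (Fin n) → ℝ} {x : EuclideanSpace ℝ (Fin n)}

lemma hasFDerivAt_pd (hφ : DifferentiableAt ℝ (fderiv ℝ φ) x) (i : Fin n) :
    HasFDerivAt (pd φ i)
      ((fderiv ℝ (fderiv ℝ φ) x).flip (EuclideanSpace.single i 1)) x := by
  have h := hφ.hasFDerivAt.clm_apply (hasFDerivAt_const (EuclideanSpace.single i (1 : ℝ)) x)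
  simp only [ContinuousLinearMap.comp_zero, zero_add] at h
  exact h

lemma pd2_comm (hφ : ∀ᶠ y in 𝓝 x, DifferentiableAt ℝ φ y)
    (hφ' : DifferentiableAt ℝ (fderiv ℝ φ) x) (i j : Fin n) : pd2 φ i j x = pd2 φ j i x := by
  simp only [pd2, pd.eq_1 (pd φ _), (hasFDerivAt_pd hφ' _).fderiv, ContinuousLinearMap.flip_apply]
  exact second_derivative_symmetric_of_eventually (hφ.mono fun _ hy => hy.hasFDerivAt)
    hφ'.hasFDerivAt _ _

lemma pd_sub (hφ : DifferentiableAt ℝ φ x) (hψ : DifferentiableAt ℝ ψ x) (i : Fin n) :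
    pd (fun y => φ y - ψ y) i x = pd φ i x - pd ψ i x := by
  simp [pd, fderiv_fun_sub hφ hψ]

lemma pd_mul (hφ : DifferentiableAt ℝ φ x) (hψ : DifferentiableAt ℝ ψ x) (i : Fin n) :
    pd (fun y => φ y * ψ y) i x = pd φ i x * ψ x + φ x * pd ψ i x := by
  simp only [pd, fderiv_fun_mul hφ hψ, _root_.add_apply, _root_.smul_apply, smul_eq_mul]
  ring

lemma pd_sum {ι : Type*} {s : Finset ι} {Φ : ι → EuclideanSpace ℝ (Fin n) → ℝ}
    (hΦ : ∀ c ∈ s, DifferentiableAt ℝ (Φ c) x) (i : Fin n) :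
    pd (fun y => ∑ c ∈ s, Φ c y) i x = ∑ c ∈ s, pd (Φ c) i x := by
  simp [pd, fderiv_fun_sum hΦ]

end PartialDerivatives

section MatrixCalculus

variable {n : ℕ} {ι κ τ : Type*} {x : EuclideanSpace ℝ (Fin n)}

/-- The entrywise partial derivative `∂_i A` of a matrix-valued function. -/
def pdMatrix (A : EuclideanSpace ℝ (Fin n) → Matrix ι κ ℝ) (i : Fin n)
    (x : EuclideanSpace ℝ (Fin n)) : Matrix ι κ ℝ :=
  of fun a b => pd (fun y => A y a b) i x

lemma pdMatrix_mul [Fintype κ] {A : EuclideanSpace ℝ (Fin n) → Matrix ι κ ℝ}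
    {B : EuclideanSpace ℝ (Fin n) → Matrix κ τ ℝ}
    (hA : ∀ a b, DifferentiableAt ℝ (fun y => A y a b) x)
    (hB : ∀ a b, DifferentiableAt ℝ (fun y => B y a b) x) (i : Fin n) :
    pdMatrix (fun y => A y * B y) i x = pdMatrix A i x * B x + A x * pdMatrix B i x := by
  ext a b
  simp only [pdMatrix, of_apply, Matrix.mul_apply, Matrix.add_apply]
  rw [pd_sum fun c _ => (hA a c).fun_mul (hB c b), ← Finset.sum_add_distrib]
  exact Finset.sum_congr rfl fun c _ => pd_mul (hA a c) (hB c b) i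

lemma pdMatrix_const_add (C : Matrix ι κ ℝ) (A : EuclideanSpace ℝ (Fin n) → Matrix ι κ ℝ)
    (i : Fin n) : pdMatrix (fun y => C + A y) i x = pdMatrix A i x := by
  ext a b
  simp [pdMatrix, pd]

lemma pdMatrix_eq_of_hasFDerivAt [Finite ι] [Finite κ]
    {A : EuclideanSpace ℝ (Fin n) → Matrix ι κ ℝ} {A' : EuclideanSpace ℝ (Fin n) →L[ℝ] Matrix ι κ ℝ}
    (hA : HasFDerivAt A A' x) (i : Fin n) :
    pdMatrix A i x = A' (EuclideanSpace.single i 1) := by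
  have := Fintype.ofFinite ι
  have := Fintype.ofFinite κ
  ext a b
  have hA_entry := hasFDerivAt_pi'.1 (hasFDerivAt_pi'.1 hA a) b
  exact DFunLike.congr_fun hA_entry.fderiv (EuclideanSpace.single i 1)

section

attribute [local instance] Matrix.linftyOpNormedRing Matrix.linftyOpNormedAlgebra

lemma pdMatrix_inv [Fintype κ] [DecidableEq κ] {A : EuclideanSpace ℝ (Fin n) → Matrix κ κ ℝ}
    (hA : ∀ a b, DifferentiableAt ℝ (fun y => A y a b) x) (hunit : IsUnit (A x)) (i : Fin n) :
    pdMatrix (fun y => (A y)⁻¹) i x = -((A x)⁻¹ * pdMatrix A i x * (A x)⁻¹) := by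
  obtain ⟨u, hu⟩ := hunit
  have hA' : HasFDerivAt A (fderiv ℝ A x) x :=
    (differentiableAt_pi.2 fun a => differentiableAt_pi.2 (hA a)).hasFDerivAt
  have inv_eq : (fun y => (A y)⁻¹) = Ring.inverse ∘ A :=
    funext fun y => nonsing_inv_eq_ringInverse (A y)
  rw [inv_eq, pdMatrix_eq_of_hasFDerivAt ((hu ▸ hasFDerivAt_ringInverse (𝕜 := ℝ) u).comp x hA'),
    pdMatrix_eq_of_hasFDerivAt hA', ← hu, ← coe_units_inv]
  rfl

end

end MatrixCalculus

section Graph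

variable {n m : ℕ} {f : Fin m → EuclideanSpace ℝ (Fin n) → ℝ} {x : EuclideanSpace ℝ (Fin n)}

/-- The Jacobian matrix `(f_i^α)`, with rows indexed by `α`. -/
def jacobian (f : Fin m → EuclideanSpace ℝ (Fin n) → ℝ) (x : EuclideanSpace ℝ (Fin n)) :
    Matrix (Fin m) (Fin n) ℝ :=
  of fun α i => pd (f α) i x

lemma gmat_eq_one_add : gmat f x = 1 + (jacobian f x)ᵀ * jacobian f x := by
  ext i j
  simp [gmat, jacobian, Matrix.mul_apply, Matrix.one_apply]

lemma Umat_eq_one_add : Umat f x = 1 + jacobian f x * (jacobian f x)ᵀ := by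
  ext α β
  simp [Umat, jacobian, Matrix.mul_apply, Matrix.one_apply]

lemma isUnit_Umat : IsUnit (Umat f x) :=
  Umat_eq_one_add ▸ isUnit_one_add_mul_transpose _

lemma isSymm_inv_Umat : (Umat f x)⁻¹.IsSymm := by
  have isSymm_Umat : (Umat f x).IsSymm := by
    simp [Umat_eq_one_add, IsSymm, transpose_mul]
  rw [IsSymm, transpose_nonsing_inv, isSymm_Umat.eq]

lemma Mmat_eq_jacobian_conj :
    Mmat f x = (jacobian f x)ᵀ * (Umat f x)⁻¹ * jacobian f x := by
  rw [Umat_eq_one_add, ← one_sub_inv_one_add_mul _ _ (isUnit_one_add_mul_transpose _),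
    ← gmat_eq_one_add]
  ext i j
  simp [Mmat, Matrix.one_apply]

/-- The matrix `A_i^{γμ} = ⟨Df^γ, Df_i^μ⟩`; its symmetrization is `∂_i U`. -/
def gradHessGram (f : Fin m → EuclideanSpace ℝ (Fin n) → ℝ) (i : Fin n)
    (x : EuclideanSpace ℝ (Fin n)) : Matrix (Fin m) (Fin m) ℝ :=
  of fun γ μ => ∑ l, pd (f γ) l x * pd2 (f μ) i l x

lemma gradHessGram_eq_mul_transpose (i : Fin n) :
    gradHessGram f i x = jacobian f x * (pdMatrix (jacobian f) i x)ᵀ :=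
  rfl

lemma pdMatrix_Umat (hf : ∀ α i, DifferentiableAt ℝ (pd (f α) i) x) (i : Fin n) :
    pdMatrix (Umat f) i x = gradHessGram f i x + (gradHessGram f i x)ᵀ := by
  have Umat_eq : Umat f = fun y => 1 + jacobian f y * (jacobian f y)ᵀ :=
    funext fun _ => Umat_eq_one_add
  rw [Umat_eq, pdMatrix_const_add,
    pdMatrix_mul (A := jacobian f) (B := fun y => (jacobian f y)ᵀ) hf fun i α => hf α i, add_comm,
    gradHessGram_eq_mul_transpose, transpose_mul, transpose_transpose]
  rfl

lemma pdMatrix_inv_Umat (hf : ∀ α i, DifferentiableAt ℝ (pd (f α) i) x) (i : Fin n) :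
    pdMatrix (fun y => (Umat f y)⁻¹) i x =
      -((Umat f x)⁻¹ * (gradHessGram f i x + (gradHessGram f i x)ᵀ) * (Umat f x)⁻¹) := by
  have differentiableAt_Umat (α β : Fin m) : DifferentiableAt ℝ (fun y => Umat f y α β) x :=
    (DifferentiableAt.fun_sum fun i _ => (hf α i).fun_mul (hf β i)).const_add _
  rw [pdMatrix_inv differentiableAt_Umat isUnit_Umat, pdMatrix_Umat hf]

lemma sum_pd_Fik (hf : ∀ α i, DifferentiableAt ℝ (pd (f α) i) x)
    (hsymm : ∀ α i j, pd2 (f α) i j x = pd2 (f α) j i x) (β α : Fin m) (i : Fin n) :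
    ∑ k, pd (Fik f β α i k) k x =
      (newtonFlux (jacobian f x) (pdMatrix (jacobian f) · x) i -
        (newtonFlux (jacobian f x) (pdMatrix (jacobian f) · x) i)ᵀ) β α := by
  have pd_Fik (k : Fin n) : pd (Fik f β α i k) k x =
      (pd2 (f β) k i x * pd (f α) k x + pd (f β) i x * pd2 (f α) k k x) -
        (pd2 (f β) k k x * pd (f α) i x + pd (f β) k x * pd2 (f α) k i x) := by
    unfold Fik
    rw [pd_sub ((hf β i).fun_mul (hf α k)) ((hf β k).fun_mul (hf α i)), pd_mul (hf β i) (hf α k),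
      pd_mul (hf β k) (hf α i)]
    rfl
  rw [Matrix.sub_apply, transpose_apply]
  simp only [newtonFlux, of_apply, ← Finset.sum_sub_distrib]
  refine Finset.sum_congr rfl fun k _ => ?_
  rw [pd_Fik, hsymm β k i, hsymm α k i]
  change _ = pd (f β) i x * pd2 (f α) k k x - pd (f β) k x * pd2 (f α) i k x -
    (pd (f α) i x * pd2 (f β) k k x - pd (f α) k x * pd2 (f β) i k x)
  ring

lemma sum_pd_inv_Umat_mul (hf : ∀ α i, DifferentiableAt ℝ (pd (f α) i) x) (i : Fin n) :
    ∑ k, ∑ α, ∑ β, pd (fun y => (Umat f y)⁻¹ α β) i x *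
        (pd (f β) i x * pd2 (f α) k k x - pd (f β) k x * pd2 (f α) i k x) =
      -trace ((Umat f x)⁻¹ * (gradHessGram f i x + (gradHessGram f i x)ᵀ) * (Umat f x)⁻¹ *
        newtonFlux (jacobian f x) (pdMatrix (jacobian f) · x) i) := by
  rw [← trace_neg, ← Matrix.neg_mul, ← pdMatrix_inv_Umat hf]
  simp_rw [Finset.sum_comm (s := (Finset.univ : Finset (Fin n)))
    (t := (Finset.univ : Finset (Fin m))), ← Finset.mul_sum]
  rfl

lemma sum_inv_Umat_mul_pd_Fik (hf : ∀ α i, DifferentiableAt ℝ (pd (f α) i) x)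
    (hsymm : ∀ α i j, pd2 (f α) i j x = pd2 (f α) j i x) (i : Fin n) :
    ∑ k, ∑ α, ∑ β, ∑ γ, ∑ μ, (Umat f x)⁻¹ α γ * (Umat f x)⁻¹ β μ *
        (∑ l, pd (f γ) l x * pd2 (f μ) i l x) * pd (Fik f β α i k) k x =
      trace ((Umat f x)⁻¹ * gradHessGram f i x * (Umat f x)⁻¹ *
        (newtonFlux (jacobian f x) (pdMatrix (jacobian f) · x) i -
          (newtonFlux (jacobian f x) (pdMatrix (jacobian f) · x) i)ᵀ)) := by
  simp_rw [Finset.sum_comm (s := (Finset.univ : Finset (Fin n)))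
    (t := (Finset.univ : Finset (Fin m))), ← Finset.mul_sum, sum_pd_Fik hf hsymm]
  have four_index := trace_mul_mul_transpose_mul (Umat f x)⁻¹ (Umat f x)⁻¹ (gradHessGram f i x)
    (newtonFlux (jacobian f x) (pdMatrix (jacobian f) · x) i -
      (newtonFlux (jacobian f x) (pdMatrix (jacobian f) · x) i)ᵀ)
  rw [isSymm_inv_Umat.eq] at four_index
  exact four_index.symm

end Graph

theorem lemma_2_3_iii_general (n m : ℕ) (f : Fin m → EuclideanSpace ℝ (Fin n) → ℝ)
    (x : EuclideanSpace ℝ (Fin n)) (hf : ∀ α, ∀ᶠ y in 𝓝 x, DifferentiableAt ℝ (f α) y)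
    (hf' : ∀ α, DifferentiableAt ℝ (fderiv ℝ (f α)) x) :
    2 * (∑ i, ∑ k, ∑ l, ∑ α, ∑ β, Mmat f x k l * (Umat f x)⁻¹ α β *
          (pd2 (f β) i i x * pd2 (f α) k l x - pd2 (f β) i k x * pd2 (f α) i l x)) =
      -(∑ i, ∑ k, ∑ α, ∑ β, pd (fun y => (Umat f y)⁻¹ α β) i x *
            (pd (f β) i x * pd2 (f α) k k x - pd (f β) k x * pd2 (f α) i k x)) -
        ∑ i, ∑ k, ∑ α, ∑ β, ∑ γ, ∑ μ, (Umat f x)⁻¹ α γ * (Umat f x)⁻¹ β μ *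
          (∑ l, pd (f γ) l x * pd2 (f μ) i l x) * pd (Fik f β α i k) k x := by
  have hpd (α i) : DifferentiableAt ℝ (pd (f α) i) x := (hasFDerivAt_pd (hf' α) i).differentiableAt
  have hsymm (α i j) : pd2 (f α) i j x = pd2 (f α) j i x := pd2_comm (hf α) (hf' α) i j
  have contraction := sum_trace_conj_mul_newtonFlux (isSymm_inv_Umat (f := f) (x := x))
    (jacobian f x) (pdMatrix (jacobian f) · x)
  simp only [← Mmat_eq_jacobian_conj, ← gradHessGram_eq_mul_transpose] at contraction
  simp only [sum_pd_inv_Umat_mul hpd, sum_inv_Umat_mul_pd_Fik hpd hsymm,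
    Finset.sum_neg_distrib, neg_neg, ← Finset.sum_sub_distrib,
    trace_conj_add_transpose_sub_trace_conj isSymm_inv_Umat, ← Finset.mul_sum]
  exact congrArg (2 * ·) contraction.symm

/-- Lemma 2.3(iii): pointwise,
2 Σ_{i,k,l,α,β} M_{kl} U^{αβ} (f_{ii}^β f_{kl}^α − f_{ik}^β f_{il}^α)
 = −Σ_{i,k,α,β} (∂_i U^{αβ})(f_i^β f_{kk}^α − f_k^β f_{ik}^α)
   −Σ_{i,k,α,β,γ,μ} U^{αγ} U^{βμ} ⟨Df^γ, Df_i^μ⟩ ∂_k F_{ik}^{βα}. -/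
theorem lemma_2_3_iii (n m : ℕ) (f : Fin m → EuclideanSpace ℝ (Fin n) → ℝ)
    (hf : ∀ α, ContDiff ℝ 2 (f α)) :
    ∀ x : EuclideanSpace ℝ (Fin n),
      2 * (∑ i, ∑ k, ∑ l, ∑ α, ∑ β, Mmat f x k l * (Umat f x)⁻¹ α β *
            (pd2 (f β) i i x * pd2 (f α) k l x - pd2 (f β) i k x * pd2 (f α) i l x)) =
      -(∑ i, ∑ k, ∑ α, ∑ β, pd (fun y => (Umat f y)⁻¹ α β) i x *
            (pd (f β) i x * pd2 (f α) k k x - pd (f β) k x * pd2 (f α) i k x)) -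
        ∑ i, ∑ k, ∑ α, ∑ β, ∑ γ, ∑ μ, (Umat f x)⁻¹ α γ * (Umat f x)⁻¹ β μ *
          (∑ l, pd (f γ) l x * pd2 (f μ) i l x) * pd (Fik f β α i k) k x := fun x =>
  lemma_2_3_iii_general n m f x
    (fun α => .of_forall ((hf α).differentiable two_ne_zero))
    fun α => ((hf α).fderiv_right (m := 1) (by norm_num)).differentiable one_ne_zero x
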